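/- arXiv:cs/0610132 — 2 statements merged into one kernel-verified Lean document; each statement's English description precedes it below -/
import Mathlib

section
/- Fix positive integers u and m and a vector v ∈ F^n, and let I_{v,m} = ⟨z − h_v, η⟩^m ⊆ R[z]. Suppose f ∈ I_{v,m} is nonzero and write f uniquely as an F-linear combination of monomials x^i y^j z^k with 0 ≤ j ≤ q−1; let w = deg_u(f) be the maximum of q·i + (q+1)·j + u·k over the monomials appearing. Let M ∈ F[X,Y] be such that its residue class μ in R has deg_u(μ) ≤ u (i.e., μ ∈ L(uP∞)), let c = (M(P_1),…,M(P_n)) and t = d(v, c) the number of indices i with v_i ≠ M(P_i). If t < n − w/m, then f(μ) = 0 in R, where f(μ) denotes the result of substituting z by μ in f. -/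
set_option synthInstance.maxHeartbeats 1000000
set_option maxHeartbeats 1000000

open MvPolynomial

/-- The polynomial `H_i ∈ F[X,Y]` attached to the rational point `(α, β)` of the Hermitian
curve: `H = −∏_{a ∈ F, a ≠ α} (X − a) · ∏_{b ∈ F, b ≠ β, b^q + b = β^q + β} (Y − b)`. -/
noncomputable def Hpoly (q : ℕ) {F : Type*} [Field F] [Fintype F] [DecidableEq F]
    (α β : F) : MvPolynomial (Fin 2) F :=
  -((∏ a ∈ Finset.univ.erase α, (X 0 - C a)) *
    ∏ b ∈ (Finset.univ.filter fun b : F => b ^ q + b = β ^ q + β).erase β, (Y - C b))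
  where Y : MvPolynomial (Fin 2) F := X 1

/-- The `F`-linear combination of the monomials `X^i Y^j Z^k` (`0 ≤ j ≤ q−1`) of `F[X,Y,Z]`
with coefficient family `c`. -/
noncomputable def monoSum3 {q : ℕ} {F : Type*} [Field F] (c : (ℕ × Fin q × ℕ) →₀ F) :
    MvPolynomial (Fin 3) F :=
  ∑ p ∈ c.support, C (c p) * X 0 ^ p.1 * X 1 ^ (p.2.1 : ℕ) * X 2 ^ p.2.2


theorem frob_aux (q : ℕ) (hq : IsPrimePow q) (F : Type*) [Field F] [Fintype F]
    (hF : Fintype.card F = q ^ 2) (A : Type*) [CommRing A] [Nontrivial A] [Algebra F A] (a b : A) :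
    (a + b) ^ q = a ^ q + b ^ q := by
  obtain ⟨p, hp⟩ := CharP.exists F
  obtain ⟨n, hpp, hn⟩ := FiniteField.card F p
  obtain ⟨p', k, hp', hk, rfl⟩ := (isPrimePow_nat_iff q).1 hq
  have : p = p' := by
    rw [hn] at hF
    have h1 : p ∣ (p' ^ k) ^ 2 := hF ▸ dvd_pow_self p n.ne_zero
    exact (Nat.prime_dvd_prime_iff_eq hpp hp').1 (hpp.dvd_of_dvd_pow (hpp.dvd_of_dvd_pow h1))
  subst this
  have : Fact p.Prime := ⟨hpp⟩
  have : CharP A p := charP_of_injective_algebraMap (algebraMap F A).injective p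
  exact add_pow_char_pow a b p k

theorem curve_prime (q : ℕ) (hq : 2 ≤ q) (F : Type*) [Field F] :
    (Ideal.span {(X 0 : MvPolynomial (Fin 2) F) ^ (q + 1) - X 1 ^ q - X 1}).IsPrime := by
  have hirr : Irreducible ((Polynomial.X : Polynomial (MvPolynomial (Fin 1) F)) ^ (q+1) -
      Polynomial.C (X 0 ^ q + X 0)) := by
    have hmon := Polynomial.monic_X_pow_sub_C (X 0 ^ q + X 0 : MvPolynomial (Fin 1) F) (n := q+1) (by omega)
    have hX : Prime (X 0 : MvPolynomial (Fin 1) F) := MvPolynomial.X_prime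
    have hE : ((Polynomial.X : Polynomial (MvPolynomial (Fin 1) F)) ^ (q+1) -
      Polynomial.C (X 0 ^ q + X 0)).IsEisensteinAt (Ideal.span {X 0}) := by
      refine hmon.isEisensteinAt_of_mem_of_notMem ?_ ?_ ?_
      · exact ((Ideal.span_singleton_prime hX.ne_zero).2 hX).ne_top
      · intro n hn
        rw [Polynomial.natDegree_X_pow_sub_C] at hn
        rw [Polynomial.coeff_sub, Polynomial.coeff_X_pow, if_neg hn.ne, zero_sub, neg_mem_iff,
          Polynomial.coeff_C]
        split_ifs
        · rw [Ideal.mem_span_singleton]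
          exact dvd_add (dvd_pow_self _ (by omega)) dvd_rfl
        · exact zero_mem _
      · rw [Ideal.span_singleton_pow, Ideal.mem_span_singleton]
        simp only [Polynomial.coeff_sub, Polynomial.coeff_X_pow, Polynomial.coeff_C_zero]
        rw [if_neg (by omega), zero_sub, dvd_neg]
        obtain ⟨r, rfl⟩ : ∃ r, q = r + 2 := ⟨q - 2, by omega⟩
        have : (X 0 : MvPolynomial (Fin 1) F)^(r+2) + X 0 = X 0 * (X 0^(r+1) + 1) := by ring
        rw [this, pow_two, mul_dvd_mul_iff_left hX.ne_zero]
        rintro ⟨k, hk⟩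
        have := congrArg (MvPolynomial.eval (fun _ => (0:F))) hk
        simp at this
    exact hE.irreducible ((Ideal.span_singleton_prime hX.ne_zero).2 hX) hmon.isPrimitive
      (by rw [Polynomial.natDegree_X_pow_sub_C]; omega)
  have he : (MvPolynomial.finSuccEquiv F 1) ((X 0 : MvPolynomial (Fin 2) F) ^ (q + 1) - X 1 ^ q - X 1)
    = (Polynomial.X : Polynomial (MvPolynomial (Fin 1) F)) ^ (q+1) -
      Polynomial.C (X 0 ^ q + X 0) := by
    have h1 : (MvPolynomial.finSuccEquiv F 1) (X 1) = Polynomial.C (X 0) :=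
      MvPolynomial.finSuccEquiv_X_succ (j := 0)
    simp only [map_sub, map_pow, MvPolynomial.finSuccEquiv_X_zero, h1, map_add]
    ring
  rw [← he] at hirr
  have hirr' := (MulEquiv.irreducible_iff (MvPolynomial.finSuccEquiv F 1)).1 hirr
  exact (Ideal.span_singleton_prime hirr'.ne_zero).2 hirr'.prime

/-- weighted degree bound on `F[X][Y]`. -/
def Wb {F : Type*} [Field F] (q W : ℕ) (H : Polynomial (Polynomial F)) : Prop :=
  ∀ j i, (H.coeff j).coeff i ≠ 0 → q * i + (q + 1) * j ≤ W

section wb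
variable {F : Type*} [Field F] {q : ℕ}

theorem Wb.mono {W W' : ℕ} {H : Polynomial (Polynomial F)} (h : Wb q W H) (hW : W ≤ W') :
    Wb q W' H := fun j i hh => (h j i hh).trans hW

theorem Wb.zero {W : ℕ} : Wb q W (0 : Polynomial (Polynomial F)) := by
  intro j i h; simp at h

theorem Wb.add {W : ℕ} {H K : Polynomial (Polynomial F)} (h : Wb q W H) (k : Wb q W K) :
    Wb q W (H + K) := by
  intro j i hh
  rw [Polynomial.coeff_add, Polynomial.coeff_add] at hh
  by_cases h1 : (H.coeff j).coeff i = 0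
  · exact k j i (by simpa [h1] using hh)
  · exact h j i h1

theorem Wb.sum {ι : Type*} {W : ℕ} (s : Finset ι) (f : ι → Polynomial (Polynomial F))
    (h : ∀ i ∈ s, Wb q W (f i)) : Wb q W (∑ i ∈ s, f i) := by
  classical
  induction s using Finset.induction_on with
  | empty => simpa using Wb.zero
  | insert a s ha ih =>
    rw [Finset.sum_insert ha]
    exact (h a (by simp)).add (ih fun i hi => h i (by simp [hi]))

theorem Wb.mul {W V : ℕ} {H K : Polynomial (Polynomial F)} (h : Wb q W H) (k : Wb q V K) :
    Wb q (W + V) (H * K) := by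
  intro j i hh
  rw [Polynomial.coeff_mul, Polynomial.finsetSum_coeff] at hh
  obtain ⟨⟨a, b⟩, hab, h1⟩ := Finset.exists_ne_zero_of_sum_ne_zero hh
  rw [Polynomial.coeff_mul] at h1
  obtain ⟨⟨a', b'⟩, hab', h2⟩ := Finset.exists_ne_zero_of_sum_ne_zero h1
  have e1 := h _ _ (left_ne_zero_of_mul h2)
  have e2 := k _ _ (right_ne_zero_of_mul h2)
  replace hab : a + b = j := by simpa using hab
  replace hab' : a' + b' = i := by simpa using hab'
  simp only at e1 e2
  subst hab hab'
  linarith [mul_add q a' b', mul_add (q+1) a b]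

theorem Wb.one : Wb q 0 (1 : Polynomial (Polynomial F)) := by
  intro j i h
  rw [Polynomial.coeff_one] at h
  split_ifs at h with h1
  · rw [Polynomial.coeff_one] at h
    split_ifs at h with h2
    · simp [h1, h2]
    · simp at h
  · simp at h

theorem Wb.pow {W : ℕ} {H : Polynomial (Polynomial F)} (h : Wb q W H) (n : ℕ) :
    Wb q (W * n) (H ^ n) := by
  induction n with
  | zero => simpa using Wb.one
  | succ n ih => rw [pow_succ, Nat.mul_succ]; exact ih.mul h

theorem Wb.prod {ι : Type*} {W : ℕ} (s : Finset ι) (f : ι → Polynomial (Polynomial F))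
    (h : ∀ i ∈ s, Wb q W (f i)) : Wb q (s.card * W) (∏ i ∈ s, f i) := by
  classical
  induction s using Finset.induction_on with
  | empty => simpa using Wb.one
  | insert a s ha ih =>
    rw [Finset.prod_insert ha, Finset.card_insert_of_notMem ha, add_mul, one_mul, add_comm]
    exact (h a (by simp)).mul (ih fun i hi => h i (by simp [hi]))

theorem Wb.const (a : F) : Wb q 0 (Polynomial.C (Polynomial.C a)) := by
  intro j i h
  rw [Polynomial.coeff_C] at h
  split_ifs at h with h1
  · rw [Polynomial.coeff_C] at h
    split_ifs at h with h2
    · simp [h1, h2]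
    · simp at h
  · simp at h

theorem Wb.x : Wb q q (Polynomial.C Polynomial.X : Polynomial (Polynomial F)) := by
  intro j i h
  rw [Polynomial.coeff_C] at h
  split_ifs at h with h1
  · rw [Polynomial.coeff_X] at h
    split_ifs at h with h2
    · simp [h1, ← h2]
    · simp at h
  · simp at h

theorem Wb.y : Wb q (q + 1) (Polynomial.X : Polynomial (Polynomial F)) := by
  intro j i h
  rw [Polynomial.coeff_X] at h
  split_ifs at h with h1
  · rw [Polynomial.coeff_one] at h
    split_ifs at h with h2
    · simp [← h1, h2]
    · simp at h
  · simp at h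

theorem natDegree_L (hq : 2 ≤ q) :
    (Polynomial.X ^ q + Polynomial.X : Polynomial (Polynomial F)).natDegree = q := by
  rw [Polynomial.natDegree_add_eq_left_of_natDegree_lt] <;> rw [Polynomial.natDegree_X_pow]
  rw [Polynomial.natDegree_X]; omega

theorem Wb.comp_deg {W : ℕ} (hq : 2 ≤ q) (P : Polynomial (Polynomial F))
    (h : Wb q W (P.comp (Polynomial.X ^ q + Polynomial.X))) (k i : ℕ)
    (hk : (P.coeff k).coeff i ≠ 0) : q * i + (q + 1) * (q * k) ≤ W := by
  have key : ∀ n k, P.natDegree < k + n → ∀ i, (P.coeff k).coeff i ≠ 0 →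
      q * i + (q + 1) * (q * k) ≤ W := by
    intro n
    induction n with
    | zero =>
      intro k hk i h
      rw [Polynomial.coeff_eq_zero_of_natDegree_lt (p := P) (n := k) (by simpa using hk)] at h
      simp at h
    | succ n ih =>
      intro k hk i hi
      by_contra hcon
      have hc : ((P.comp (Polynomial.X ^ q + Polynomial.X)).coeff (q * k)).coeff i = 0 := by
        by_contra h'
        exact hcon (h _ _ h')
      rw [Polynomial.comp_eq_sum_left, Polynomial.sum_def, Polynomial.finsetSum_coeff,
        Polynomial.finsetSum_coeff, Finset.sum_eq_single k] at hc
      · apply hi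
        rw [Polynomial.coeff_C_mul] at hc
        have hL : (Polynomial.X ^ q + Polynomial.X : Polynomial (Polynomial F)).Monic :=
          Polynomial.monic_X_pow_add (by rw [Polynomial.degree_X]; exact_mod_cast hq)
        have hLd : (Polynomial.X ^ q + Polynomial.X : Polynomial (Polynomial F)).natDegree = q := by
          exact natDegree_L hq
        have := hL.pow k
        rw [Polynomial.Monic, Polynomial.leadingCoeff, hL.natDegree_pow, hLd, mul_comm] at this
        rwa [this, mul_one] at hc
      · intro b hb hbk
        rw [Polynomial.coeff_C_mul]
        rcases lt_or_gt_of_ne hbk with h1 | h1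
        · have : ((Polynomial.X ^ q + Polynomial.X : Polynomial (Polynomial F)) ^ b).coeff (q * k) = 0 := by
            apply Polynomial.coeff_eq_zero_of_natDegree_lt
            have h2 : (Polynomial.X ^ q + Polynomial.X : Polynomial (Polynomial F)).natDegree ≤ q := by
              compute_degree; omega
            calc _ ≤ b * q := Polynomial.natDegree_pow_le_of_le b h2
              _ < q * k := by rw [mul_comm]; exact Nat.mul_lt_mul_of_pos_left h1 (by omega)
          rw [this]; simp
        · have : (Polynomial.X ^ q + Polynomial.X : Polynomial (Polynomial F)) ^ b =
            ((Polynomial.X ^ q + Polynomial.X : Polynomial F) ^ b).map Polynomial.C := by simp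
          rw [this, Polynomial.coeff_map, Polynomial.coeff_mul_C]
          have : (P.coeff b).coeff i = 0 := by
            by_contra h'
            have := ih b (by omega) i h'
            apply hcon
            refine le_trans ?_ this
            gcongr
          rw [this, zero_mul]
      · intro hk
        rw [Polynomial.notMem_support_iff.1 hk]; simp
  exact key (P.natDegree + 1) k (by omega) i hk

theorem inv_comp (hq : 2 ≤ q) (K : Finset F) (hK : K.card = q) 
    (hL : ∀ c ∈ K, (Polynomial.X ^ q + Polynomial.X : Polynomial (Polynomial F)).comp
      (Polynomial.X + Polynomial.C (Polynomial.C c)) = Polynomial.X ^ q + Polynomial.X)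
    (H : Polynomial (Polynomial F))
    (hH : ∀ c ∈ K, H.comp (Polynomial.X + Polynomial.C (Polynomial.C c)) = H) :
    ∃ P : Polynomial (Polynomial F), H = P.comp (Polynomial.X ^ q + Polynomial.X) := by
  have hm : (Polynomial.X ^ q + Polynomial.X : Polynomial (Polynomial F)).Monic :=
    Polynomial.monic_X_pow_add (by rw [Polynomial.degree_X]; exact_mod_cast hq)
  have hLd : (Polynomial.X ^ q + Polynomial.X : Polynomial (Polynomial F)).natDegree = q := by
    exact natDegree_L hq
  generalize hn : H.natDegree = n
  induction n using Nat.strong_induction_on generalizing H with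
  | _ n ih =>
  by_cases h0 : H.natDegree = 0
  · exact ⟨H, by rw [Polynomial.eq_C_of_natDegree_eq_zero h0]; simp⟩
  set L := (Polynomial.X ^ q + Polynomial.X : Polynomial (Polynomial F)) with hLdef
  have hdm := Polynomial.modByMonic_add_div H L
  have huniq : ∀ c ∈ K, (H /ₘ L).comp (Polynomial.X + Polynomial.C (Polynomial.C c)) = H /ₘ L ∧
      (H %ₘ L).comp (Polynomial.X + Polynomial.C (Polynomial.C c)) = H %ₘ L := by
    intro c hc
    have := Polynomial.div_modByMonic_unique (f := H)
      ((H /ₘ L).comp (Polynomial.X + Polynomial.C (Polynomial.C c)))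
      ((H %ₘ L).comp (Polynomial.X + Polynomial.C (Polynomial.C c))) hm ⟨?_, ?_⟩
    · exact ⟨this.1.symm, this.2.symm⟩
    · calc _ = (H %ₘ L).comp (Polynomial.X + Polynomial.C (Polynomial.C c)) +
            L.comp (Polynomial.X + Polynomial.C (Polynomial.C c)) *
            (H /ₘ L).comp (Polynomial.X + Polynomial.C (Polynomial.C c)) := by rw [hL c hc]
        _ = H := by rw [← Polynomial.mul_comp, ← Polynomial.add_comp, hdm, hH c hc]
    · have h1 := Polynomial.degree_modByMonic_lt H hm
      have h2 : ((H %ₘ L).comp (Polynomial.X + Polynomial.C (Polynomial.C c))).degree = (H %ₘ L).degree := by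
        exact Polynomial.degree_taylor _ _
      rw [h2]; exact h1
  have hr : H %ₘ L = Polynomial.C ((H %ₘ L).eval 0) := by
    rw [← sub_eq_zero]
    apply Polynomial.eq_zero_of_natDegree_lt_card_of_eval_eq_zero' _ (K.map ⟨Polynomial.C, Polynomial.C_injective⟩)
    · intro a ha
      obtain ⟨c, hc, rfl⟩ := Finset.mem_map.1 ha
      have := congrArg (Polynomial.eval 0) (huniq c hc).2
      simp only [Polynomial.eval_comp, Polynomial.eval_add, Polynomial.eval_X, Polynomial.eval_C,
        zero_add] at this
      simp [this]
    · rw [Finset.card_map, hK, Polynomial.natDegree_sub_C, ← hLd]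
      exact Polynomial.natDegree_modByMonic_lt H hm (by
        intro h; rw [h] at hLd; simp at hLd; omega)
  obtain ⟨P, hP⟩ := ih (H /ₘ L).natDegree
    (by rw [Polynomial.natDegree_divByMonic H hm, hLd]; omega) (H /ₘ L)
    (fun c hc => (huniq c hc).1) rfl
  refine ⟨Polynomial.C ((H %ₘ L).eval 0) + Polynomial.X * P, ?_⟩
  rw [Polynomial.add_comp, Polynomial.mul_comp, Polynomial.C_comp, Polynomial.X_comp, ← hP, ← hr, hdm]

theorem exists_p (hq : 2 ≤ q) (K : Finset F) (hK : K.card = q) 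
    (hL : ∀ c ∈ K, (Polynomial.X ^ q + Polynomial.X : Polynomial (Polynomial F)).comp
      (Polynomial.X + Polynomial.C (Polynomial.C c)) = Polynomial.X ^ q + Polynomial.X)
    (H : Polynomial (Polynomial F))
    (hH : ∀ c ∈ K, H.comp (Polynomial.X + Polynomial.C (Polynomial.C c)) = H)
    (w : ℕ) (hw : Wb q (q * w) H) {R : Type*} [CommRing R] [Algebra F R] (x y : R)
    (hxy : x ^ (q + 1) = y ^ q + y) :
    ∃ p : Polynomial F, p.natDegree ≤ w ∧
      H.eval₂ (Polynomial.aeval x : Polynomial F →ₐ[F] R).toRingHom y = Polynomial.aeval x p := by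
  obtain ⟨P, rfl⟩ := inv_comp hq K hK hL H hH
  refine ⟨P.eval (Polynomial.X ^ (q + 1)), ?_, ?_⟩
  · rw [Polynomial.eval_eq_sum, Polynomial.sum_def]
    apply Polynomial.natDegree_sum_le_of_forall_le
    intro k hk
    have h1 := Wb.comp_deg hq P hw k _ (Polynomial.leadingCoeff_ne_zero.2 (Polynomial.mem_support_iff.1 hk))
    refine Polynomial.natDegree_mul_le.trans ?_
    rw [← pow_mul, Polynomial.natDegree_X_pow]
    refine Nat.le_of_mul_le_mul_left ?_ (lt_of_lt_of_le two_pos hq)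
    refine le_trans (le_of_eq ?_) h1
    ring
  · rw [Polynomial.eval₂_comp]
    have : Polynomial.eval₂ (Polynomial.aeval x : Polynomial F →ₐ[F] R).toRingHom y
      (Polynomial.X ^ q + Polynomial.X) = (Polynomial.aeval x : Polynomial F →ₐ[F] R).toRingHom (Polynomial.X ^ (q+1)) := by
      simp [hxy]
    rw [this, Polynomial.eval₂_hom]
    rfl
end wb

theorem prod_erase_eq_deriv {F : Type*} [Field F] [DecidableEq F] (f : Polynomial F) (hf : f.Monic)
    (S : Finset F) (hS : S.card = f.natDegree) (hr : ∀ b ∈ S, f.eval b = 0) (β : F) (hβ : β ∈ S) :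
    ∏ b ∈ S.erase β, (β - b) = f.derivative.eval β := by
  have h : f = Lagrange.nodal S id := by
    apply Polynomial.eq_of_degree_sub_lt_of_eval_finset_eq S
    · have hd : f.degree = (Lagrange.nodal S id).degree := by
        rw [Lagrange.degree_nodal, Polynomial.degree_eq_natDegree hf.ne_zero, hS]
      have := Polynomial.degree_sub_lt_left hd hf.ne_zero
        (by rw [hf.leadingCoeff, Lagrange.nodal_monic.leadingCoeff])
      rwa [Polynomial.degree_eq_natDegree hf.ne_zero, ← hS] at this
    · intro b hb
      rw [hr b hb]
      exact (Lagrange.eval_nodal_at_node (v := id) hb).symm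
  rw [h]
  have := Lagrange.eval_nodal_derivative_eval_node_eq (v := (id : F → F)) hβ
  simp only [id] at this
  rw [show (Lagrange.nodal S id : Polynomial F) = Lagrange.nodal S (fun b => b) from rfl]
  erw [this]
  rw [Lagrange.eval_nodal]
  rfl

section pts
variable {q : ℕ} {F : Type*} [Field F] [Fintype F] [DecidableEq F]

theorem q_cast_zero (hF : Fintype.card F = q ^ 2) : (q : F) = 0 := by
  have := FiniteField.cast_card_eq_zero F
  rw [hF] at this
  push_cast at this
  exact pow_eq_zero_iff (two_ne_zero) |>.1 this

theorem trace_natDegree (hq : 2 ≤ q) (t : F) :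
    (Polynomial.X ^ q + Polynomial.X - Polynomial.C t).natDegree = q := by
  rw [Polynomial.natDegree_sub_C]
  rw [Polynomial.natDegree_add_eq_left_of_natDegree_lt] <;> rw [Polynomial.natDegree_X_pow]
  rw [Polynomial.natDegree_X]; omega

theorem trace_monic (hq : 2 ≤ q) (t : F) :
    (Polynomial.X ^ q + Polynomial.X - Polynomial.C t).Monic := by
  rw [add_sub_assoc]
  apply Polynomial.monic_X_pow_add
  rw [Polynomial.degree_X_sub_C]; exact_mod_cast hq

theorem fiber_card (hq : 2 ≤ q) (hF : Fintype.card F = q ^ 2)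
    (P : Fin (q ^ 3) → F × F)
    (hPinj : Function.Injective P)
    (hPcurve : ∀ i, (P i).1 ^ (q + 1) = (P i).2 ^ q + (P i).2) (α : F) :
    (Finset.univ.filter fun b : F => b ^ q + b = α ^ (q + 1)).card = q := by
  have hle : ∀ t : F, (Finset.univ.filter fun b : F => b ^ q + b = t).card ≤ q := by
    intro t
    refine le_trans ?_ (trace_natDegree hq t).le
    apply Polynomial.card_le_degree_of_subset_roots
    intro b hb
    rw [Polynomial.mem_roots (trace_monic hq t).ne_zero]
    simpa [sub_eq_zero] using hb
  have hfib : ∀ a : F, (Finset.univ.filter fun i => (P i).1 = a).card ≤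
      (Finset.univ.filter fun b : F => b ^ q + b = a ^ (q + 1)).card := by
    intro a
    apply Finset.card_le_card_of_injOn (fun i => (P i).2)
    · intro i hi
      have : (P i).1 = a := by simpa using hi
      simp [← hPcurve, this]
    · intro i hi j hj hij
      have h1 : (P i).1 = a := by simpa using hi
      have h2 : (P j).1 = a := by simpa using hj
      exact hPinj (Prod.ext (h1.trans h2.symm) hij)
  have htot := Finset.card_eq_sum_card_fiberwise (s := (Finset.univ : Finset (Fin (q^3))))
    (t := (Finset.univ : Finset F)) (f := fun i => (P i).1) (fun _ _ => by simp)
  rw [Finset.card_univ, Fintype.card_fin] at htot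
  by_contra hne
  have hlt := lt_of_le_of_ne (hle (α ^ (q+1))) hne
  have : ∑ a : F, (Finset.univ.filter fun i => (P i).1 = a).card < ∑ a : F, q :=
    Finset.sum_lt_sum (fun a _ => (hfib a).trans (hle _)) ⟨α, by simp, (hfib α).trans_lt hlt⟩
  rw [Finset.sum_const, Finset.card_univ, hF, smul_eq_mul] at this
  rw [← htot] at this
  nlinarith

theorem Hpoly_eval (hq : 2 ≤ q) (hF : Fintype.card F = q ^ 2)
    (P : Fin (q ^ 3) → F × F)
    (hPinj : Function.Injective P)
    (hPcurve : ∀ i, (P i).1 ^ (q + 1) = (P i).2 ^ q + (P i).2) (i j : Fin (q ^ 3)) :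
    MvPolynomial.eval ![(P j).1, (P j).2] (Hpoly q (P i).1 (P i).2) = if i = j then 1 else 0 := by
  have hq0 := q_cast_zero hF
  simp only [Hpoly, Hpoly.Y, map_neg, map_mul, map_prod, map_sub, eval_X, eval_C,
    Matrix.cons_val_zero, Matrix.cons_val_one]
  split_ifs with h
  · subst h
    rw [prod_erase_eq_deriv (Polynomial.X ^ (q^2) - Polynomial.X) ?_ _ ?_ ?_ _ (by simp),
      prod_erase_eq_deriv (Polynomial.X ^ q + Polynomial.X - Polynomial.C ((P i).2 ^ q + (P i).2))
        (trace_monic hq _) _ ?_ ?_ _ (by simp)]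
    · rw [Polynomial.derivative_sub, Polynomial.derivative_sub, Polynomial.derivative_add,
        Polynomial.derivative_C, Polynomial.derivative_X_pow, Polynomial.derivative_X_pow,
        Polynomial.derivative_X]
      simp [hq0]
    · rw [trace_natDegree hq, ← hPcurve, fiber_card hq hF P hPinj hPcurve]
    · intro b hb
      simpa [sub_eq_zero] using hb
    · apply Polynomial.monic_X_pow_sub
      rw [Polynomial.degree_X]
      have : 1 < q^2 := by nlinarith
      exact_mod_cast this
    · rw [FiniteField.X_pow_card_sub_X_natDegree_eq _ (by nlinarith), Finset.card_univ, hF]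
    · intro b hb
      simp [← hF, FiniteField.pow_card]
  · rw [neg_eq_zero, mul_eq_zero]
    by_cases h1 : (P i).1 = (P j).1
    · right
      apply Finset.prod_eq_zero (i := (P j).2)
      · simp only [Finset.mem_erase, Finset.mem_filter, Finset.mem_univ, true_and]
        refine ⟨fun h2 => h (hPinj (Prod.ext h1 h2.symm)), ?_⟩
        rw [← hPcurve, ← hPcurve, h1]
      · simp
    · left
      apply Finset.prod_eq_zero (i := (P j).1)
      · simp only [Finset.mem_erase, Finset.mem_univ, and_true]
        exact fun h2 => h1 h2.symm
      · simp

theorem hv_eval (hq : 2 ≤ q) (hF : Fintype.card F = q ^ 2)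
    (P : Fin (q ^ 3) → F × F)
    (hPinj : Function.Injective P)
    (hPcurve : ∀ i, (P i).1 ^ (q + 1) = (P i).2 ^ q + (P i).2) (v : Fin (q ^ 3) → F)
    (j : Fin (q ^ 3)) :
    MvPolynomial.eval ![(P j).1, (P j).2] (∑ i, C (v i) * Hpoly q (P i).1 (P i).2) = v j := by
  rw [map_sum]
  simp only [map_mul, eval_C, Hpoly_eval hq hF P hPinj hPcurve]
  simp
end pts

/-- local divisibility -/
theorem local_dvd {F R : Type*} [Field F] [CommRing R] [Algebra F R] (x y' u : R) (α β' : F)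
    (hu : (x - algebraMap F R α) ∣ u * (y' - algebraMap F R β'))
    (B : MvPolynomial (Fin 2) F) (hB : MvPolynomial.eval ![α, β'] B = 0) :
    (x - algebraMap F R α) ∣ u * MvPolynomial.aeval ![x, y'] B := by
  have h1 : MvPolynomial.aeval ![x, y'] B ∈
      Ideal.span {x - algebraMap F R α, y' - algebraMap F R β'} := by
    set I := Ideal.span {x - algebraMap F R α, y' - algebraMap F R β'} with hI
    have hh : (Ideal.Quotient.mkₐ F I).comp (MvPolynomial.aeval ![x, y']) =
        (Algebra.ofId F (R ⧸ I)).comp (MvPolynomial.aeval ![α, β']) := by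
      ext i
      fin_cases i
      · simp only [AlgHom.comp_apply, aeval_X]
        exact Ideal.Quotient.eq.2 (Ideal.subset_span (by simp))
      · simp only [AlgHom.comp_apply, aeval_X]
        exact Ideal.Quotient.eq.2 (Ideal.subset_span (by simp))
    have := DFunLike.congr_fun hh B
    simp only [AlgHom.comp_apply] at this
    rw [show MvPolynomial.aeval ![α, β'] B = 0 from hB, map_zero] at this
    exact Ideal.Quotient.eq_zero_iff_mem.1 this
  obtain ⟨a, b, hab⟩ := Ideal.mem_span_pair.1 h1
  rw [← hab, mul_add]
  refine dvd_add ?_ ?_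
  · exact Dvd.intro_left (u * a) (by ring)
  · rw [mul_left_comm]; exact hu.mul_left _

theorem pow_dvd_aux {R : Type*} [CommRing R] (J : Ideal R) (u s : R) (m : ℕ)
    (h : ∀ b ∈ J, s ∣ u * b) (g : R) (hg : g ∈ J ^ m) : s ^ m ∣ u ^ m * g := by
  have h1 : Ideal.span {u} * J ≤ Ideal.span {s} := by
    rw [Ideal.span_singleton_mul_le_iff]
    intro b hb
    exact Ideal.mem_span_singleton.2 (h b hb)
  have h2 := Ideal.pow_right_mono h1 m
  rw [mul_pow, Ideal.span_singleton_pow, Ideal.span_singleton_pow] at h2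
  exact Ideal.mem_span_singleton.1 (h2 (Ideal.mul_mem_mul (Ideal.mem_span_singleton_self _) hg))

theorem aeval_subst {F A : Type*} [Field F] [CommRing A] [Algebra F A] (a b : A)
    (M : MvPolynomial (Fin 2) F) (f : MvPolynomial (Fin 3) F) :
    aeval ![a, b] (aeval ![X 0, X 1, M] f) = aeval ![a, b, aeval ![a, b] M] f := by
  have : (aeval ![a, b] : MvPolynomial (Fin 2) F →ₐ[F] A).comp (aeval ![X 0, X 1, M]) =
      aeval ![a, b, aeval ![a, b] M] := by
    ext i
    fin_cases i <;> simp
  exact DFunLike.congr_fun this f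

theorem local_pow {F R : Type*} [Field F] [CommRing R] [Algebra F R] {q : ℕ} (x y' u : R) (α β' : F)
    (hxy : x ^ (q + 1) = y' ^ q + y')
    (hu : (x - algebraMap F R α) ∣ u * (y' - algebraMap F R β'))
    (m : ℕ) (f : MvPolynomial (Fin 3) F) (M h : MvPolynomial (Fin 2) F)
    (hα : α ^ (q ^ 2) = α)
    (hMh : eval ![α, β'] M = eval ![α, β'] h)
    (hfI : Ideal.Quotient.mk
        (Ideal.span {(X 0 : MvPolynomial (Fin 3) F) ^ (q + 1) - X 1 ^ q - X 1}) f ∈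
      (Ideal.span
        { Ideal.Quotient.mk
            (Ideal.span {(X 0 : MvPolynomial (Fin 3) F) ^ (q + 1) - X 1 ^ q - X 1})
            (X 2 - MvPolynomial.rename (Fin.castSucc : Fin 2 → Fin 3) h),
          Ideal.Quotient.mk
            (Ideal.span {(X 0 : MvPolynomial (Fin 3) F) ^ (q + 1) - X 1 ^ q - X 1})
            ((X 0 : MvPolynomial (Fin 3) F) ^ (q ^ 2) - X 0) }) ^ m) :
    (x - algebraMap F R α) ^ m ∣ u ^ m * aeval ![x, y'] (aeval ![X 0, X 1, M] f) := by
  let ψ : MvPolynomial (Fin 3) F →+* R := (aeval ![x, y', aeval ![x, y'] M]).toRingHom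
  have hψ : ∀ a ∈ Ideal.span {(X 0 : MvPolynomial (Fin 3) F) ^ (q + 1) - X 1 ^ q - X 1}, ψ a = 0 := by
    intro a ha
    obtain ⟨b, rfl⟩ := Ideal.mem_span_singleton.1 ha
    have : ψ (X 0 ^ (q + 1) - X 1 ^ q - X 1) = 0 := by
      simp [ψ, hxy]
    rw [map_mul, this, zero_mul]
  have h1 := Ideal.mem_map_of_mem (Ideal.Quotient.lift _ ψ hψ) hfI
  rw [Ideal.map_pow, Ideal.map_span, Set.image_pair, Ideal.Quotient.lift_mk, Ideal.Quotient.lift_mk,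
    Ideal.Quotient.lift_mk] at h1
  rw [aeval_subst]
  refine pow_dvd_aux _ u _ m ?_ _ h1
  intro b hb
  obtain ⟨r, s, rfl⟩ := Ideal.mem_span_pair.1 hb
  have e1 : ψ (X 2 - MvPolynomial.rename (Fin.castSucc : Fin 2 → Fin 3) h) = aeval ![x, y'] (M - h) := by
    have : aeval ![x, y', aeval ![x, y'] M] (MvPolynomial.rename (Fin.castSucc : Fin 2 → Fin 3) h)
      = aeval ![x, y'] h := by
      rw [aeval_rename]
      congr 2
      funext i
      fin_cases i <;> rfl
    simp only [ψ, AlgHom.toRingHom_eq_coe, map_sub, RingHom.coe_coe, this]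
    simp
  have e2 : ψ (X 0 ^ (q ^ 2) - X 0) = aeval ![x, y'] (X 0 ^ (q ^ 2) - X 0 : MvPolynomial (Fin 2) F) := by
    simp [ψ]
  rw [e1, e2, mul_add, mul_left_comm, mul_left_comm u s]
  refine dvd_add (Dvd.dvd.mul_left ?_ _) (Dvd.dvd.mul_left ?_ _)
  · exact local_dvd x y' u α β' hu _ (by rw [map_sub, hMh, sub_self])
  · exact local_dvd x y' u α β' hu _ (by simp [hα])

theorem final_dvd {F R : Type*} [Field F] [CommRing R] [IsDomain R] [Algebra F R] (x U : R) (α : F)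
    (ev : R →ₐ[F] F) (hx : ev x = α) (hU : ev U ≠ 0) (hne : x - algebraMap F R α ≠ 0)
    (p : Polynomial F) (hp : p ≠ 0) (N : ℕ)
    (h : (x - algebraMap F R α) ^ N ∣ U * Polynomial.aeval x p) :
    (Polynomial.X - Polynomial.C α) ^ N ∣ p := by
  obtain ⟨p', hp', hnd⟩ := Polynomial.exists_eq_pow_rootMultiplicity_mul_and_not_dvd p hp α
  by_cases hN : N ≤ p.rootMultiplicity α
  · exact (pow_dvd_pow _ hN).trans ⟨p', hp'⟩
  exfalso
  rw [Polynomial.dvd_iff_isRoot, Polynomial.IsRoot] at hnd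
  generalize p.rootMultiplicity α = k at *
  subst hp'
  have h1 := (pow_dvd_pow _ (show k + 1 ≤ N by omega)).trans h
  have e : Polynomial.aeval x ((Polynomial.X - Polynomial.C α) ^ k * p') =
    (x - algebraMap F R α) ^ k * Polynomial.aeval x p' := by simp
  rw [e, mul_left_comm, pow_succ, mul_dvd_mul_iff_left (pow_ne_zero _ hne)] at h1
  obtain ⟨s, hs⟩ := h1
  have := congrArg ev hs
  rw [map_mul, map_mul, map_sub, hx, AlgHom.commutes, Algebra.algebraMap_self_apply, sub_self, zero_mul,
    mul_eq_zero] at this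
  rcases this with h2 | h2
  · exact hU h2
  · rw [← Polynomial.aeval_algHom_apply, hx] at h2
    exact hnd (by simpa [Polynomial.aeval_def] using h2)

theorem wb_G {F : Type*} [Field F] {q u w : ℕ} (c : (ℕ × Fin q × ℕ) →₀ F)
    (hw : w = c.support.sup fun p => q * p.1 + (q + 1) * (p.2.1 : ℕ) + u * p.2.2)
    (M : MvPolynomial (Fin 2) F) (d : (ℕ × Fin q) →₀ F)
    (hM : M = ∑ p ∈ d.support, C (d p) * X 0 ^ p.1 * X 1 ^ (p.2 : ℕ))
    (hMdeg : ∀ p ∈ d.support, q * p.1 + (q + 1) * (p.2 : ℕ) ≤ u) (e : F) :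
    Wb q w (aeval ![(Polynomial.C Polynomial.X : Polynomial (Polynomial F)),
      Polynomial.X + Polynomial.C (Polynomial.C e)] (aeval ![X 0, X 1, M] (monoSum3 c))) := by
  have hy : Wb q (q + 1) (Polynomial.X + Polynomial.C (Polynomial.C e) : Polynomial (Polynomial F)) :=
    Wb.y.add ((Wb.const e).mono (by omega))
  rw [aeval_subst]
  have hMt : Wb q u (aeval ![(Polynomial.C Polynomial.X : Polynomial (Polynomial F)),
      Polynomial.X + Polynomial.C (Polynomial.C e)] M) := by
    rw [hM, map_sum]
    refine Wb.sum _ _ fun p hp => ?_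
    refine Wb.mono ?_ (hMdeg p hp)
    simp only [map_mul, map_pow, aeval_X, aeval_C, Matrix.cons_val_zero, Matrix.cons_val_one]
    have := ((Wb.const (q := q) (d p)).mul (Wb.x.pow p.1)).mul (hy.pow (p.2 : ℕ))
    rwa [zero_add] at this
  generalize aeval ![(Polynomial.C Polynomial.X : Polynomial (Polynomial F)),
      Polynomial.X + Polynomial.C (Polynomial.C e)] M = Mt at hMt
  rw [monoSum3, map_sum]
  refine Wb.sum _ _ fun p hp => ?_
  refine Wb.mono ?_ (hw ▸ Finset.le_sup (f := fun p : ℕ × Fin q × ℕ => q * p.1 + (q + 1) * (p.2.1 : ℕ) + u * p.2.2) hp)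
  simp only [map_mul, map_pow, aeval_X, aeval_C]
  have := (((Wb.const (q := q) (c p)).mul (Wb.x.pow p.1)).mul (hy.pow (p.2.1 : ℕ))).mul (hMt.pow p.2.2)
  rwa [zero_add] at this

theorem G_comp {F : Type*} [Field F] (G : MvPolynomial (Fin 2) F) (e e' : F) :
    (aeval ![(Polynomial.C Polynomial.X : Polynomial (Polynomial F)),
      Polynomial.X + Polynomial.C (Polynomial.C e)] G).comp
        (Polynomial.X + Polynomial.C (Polynomial.C e')) =
    aeval ![(Polynomial.C Polynomial.X : Polynomial (Polynomial F)),
      Polynomial.X + Polynomial.C (Polynomial.C (e' + e))] G := by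
  induction G using MvPolynomial.induction_on with
  | C a => simp [Polynomial.algebraMap_apply]
  | add p q hp hq => simp only [map_add, Polynomial.add_comp] at *; rw [hp, hq]
  | mul_X p i hp =>
    rw [map_mul, Polynomial.mul_comp, hp, map_mul]
    congr 1
    fin_cases i <;> simp [add_assoc]

theorem G_eval {F R : Type*} [Field F] [CommRing R] [Algebra F R] (x y : R)
    (G : MvPolynomial (Fin 2) F) (e : F) :
    Polynomial.eval₂ (Polynomial.aeval x : Polynomial F →ₐ[F] R).toRingHom y
    (aeval ![(Polynomial.C Polynomial.X : Polynomial (Polynomial F)),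
      Polynomial.X + Polynomial.C (Polynomial.C e)] G) =
    aeval ![x, y + algebraMap F R e] G := by
  induction G using MvPolynomial.induction_on with
  | C a => simp [Polynomial.algebraMap_apply]
  | add p q hp hq => simp only [map_add, Polynomial.eval₂_add] at *; rw [hp, hq]
  | mul_X p i hp =>
    rw [map_mul, Polynomial.eval₂_mul, hp, map_mul]
    congr 1
    fin_cases i <;> simp

theorem abstract_main {q : ℕ} (hq : 2 ≤ q) {F : Type*} [Field F] [Fintype F] [DecidableEq F]
    (hF : Fintype.card F = q ^ 2) {R : Type*} [CommRing R] [IsDomain R] [Algebra F R]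
    (hfrob : ∀ a b : R, (a + b) ^ q = a ^ q + b ^ q)
    (hfrobF : ∀ a b : F, (a + b) ^ q = a ^ q + b ^ q)
    (hfrobP : ∀ a b : Polynomial (Polynomial F), (a + b) ^ q = a ^ q + b ^ q)
    (x y : R) (hxy : x ^ (q + 1) = y ^ q + y)
    (hev : ∀ a b : F, a ^ (q + 1) = b ^ q + b → ∃ ev : R →ₐ[F] F, ev x = a ∧ ev y = b)
    (hsig : ∀ a : F, a ^ q + a = 0 → ∃ σ : R →ₐ[F] R, σ x = x ∧ σ y = y + algebraMap F R a)
    (P : Fin (q ^ 3) → F × F)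
    (hPinj : Function.Injective P)
    (hPcurve : ∀ i, (P i).1 ^ (q + 1) = (P i).2 ^ q + (P i).2)
    (m w : ℕ) (G : MvPolynomial (Fin 2) F)
    (hGw : ∀ e, Wb q w (aeval ![(Polynomial.C Polynomial.X : Polynomial (Polynomial F)),
      Polynomial.X + Polynomial.C (Polynomial.C e)] G))
    (good : Finset (Fin (q ^ 3)))
    (hgood : ∀ i ∈ good, ∀ (y' u : R), x ^ (q + 1) = y' ^ q + y' →
      (x - algebraMap F R (P i).1) ∣ u * (y' - algebraMap F R (P i).2) →
      (x - algebraMap F R (P i).1) ^ m ∣ u ^ m * aeval ![x, y'] G)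
    (hcard : w < m * good.card) : aeval ![x, y] G = 0 := by
  by_contra hG
  set K := (Finset.univ.filter fun b : F => b ^ q + b = 0) with hKdef
  have hKm : ∀ e, e ∈ K ↔ e ^ q + e = 0 := by intro e; simp [hKdef]
  have hK : K.card = q := by
    have := fiber_card hq hF P hPinj hPcurve 0
    rwa [zero_pow (by omega)] at this
  have hKadd : ∀ a b, a ∈ K → (a + b ∈ K ↔ b ∈ K) := by
    intro a b ha
    rw [hKm] at ha
    rw [hKm, hKm, hfrobF, show a ^ q + b ^ q + (a + b) = (a ^ q + a) + (b ^ q + b) by ring, ha, zero_add]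
  have hKneg : ∀ a ∈ K, -a ∈ K := by
    intro a ha
    rw [← hKadd a (-a) ha, add_neg_cancel, hKm]
    simp; omega
  -- the norm polynomial
  obtain ⟨p, hpd, hp⟩ := exists_p hq K hK (by
      intro e he
      rw [hKm] at he
      simp only [Polynomial.add_comp, Polynomial.pow_comp, Polynomial.X_comp]
      rw [hfrobP]
      have : (Polynomial.C (Polynomial.C e)) ^ q + Polynomial.C (Polynomial.C e) = (0 : Polynomial (Polynomial F)) := by
        rw [← map_pow, ← map_pow, ← map_add, ← map_add, he, map_zero, map_zero]
      linear_combination this)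
    (∏ e ∈ K, aeval ![(Polynomial.C Polynomial.X : Polynomial (Polynomial F)),
      Polynomial.X + Polynomial.C (Polynomial.C e)] G) (by
      intro e he
      rw [Polynomial.prod_comp]
      simp only [G_comp]
      refine Finset.prod_bij (fun a _ => e + a) ?_ ?_ ?_ ?_
      · intro a ha; exact (hKadd e a he).2 ha
      · intro a _ b _ h; exact add_left_cancel h
      · intro b hb
        exact ⟨-e + b, (hKadd _ _ (hKneg e he)).2 hb, by ring⟩
      · intro a _; rfl) w (by
      have := Wb.prod K _ fun e _ => hGw e
      rwa [hK] at this) x y hxy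
  rw [Polynomial.eval₂_finsetProd] at hp
  simp only [G_eval] at hp
  have hp0 : p ≠ 0 := by
    rintro rfl
    rw [map_zero, Finset.prod_eq_zero_iff] at hp
    obtain ⟨e, he, h0⟩ := hp
    obtain ⟨σ, hs1, hs2⟩ := hsig (-e) ((hKm _).1 (hKneg e he))
    have := congrArg σ h0
    apply hG
    rw [map_zero] at this
    rw [← this]
    have hh : σ.comp (aeval ![x, y + algebraMap F R e]) = aeval ![x, y] := by
      ext i
      fin_cases i <;> simp [hs1, hs2]
    rw [← hh]; rfl
  have hne : ∀ a : F, x - algebraMap F R a ≠ 0 := by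
    intro a h0
    obtain ⟨a', ha'⟩ := exists_ne a
    have hc := fiber_card hq hF P hPinj hPcurve a'
    obtain ⟨b, hb⟩ := Finset.card_pos.1 (hc ▸ (by omega : 0 < q))
    obtain ⟨ev, h1, h2⟩ := hev a' b (by simpa using (Finset.mem_filter.1 hb).2.symm)
    have := congrArg ev h0
    rw [map_sub, h1, AlgHom.commutes, map_zero, sub_eq_zero] at this
    exact ha' this
  have hdiv : ∀ a : F, (Polynomial.X - Polynomial.C a) ^
      (m * (good.filter fun i => (P i).1 = a).card) ∣ p := by
    intro a
    rcases (good.filter fun i => (P i).1 = a).eq_empty_or_nonempty with h0 | ⟨i0, hi0⟩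
    · simp [h0]
    obtain ⟨hi0g, rfl⟩ := Finset.mem_filter.1 hi0
    set a := (P i0).1 with ha
    set b := (P i0).2 with hb
    have hab : a ^ (q + 1) = b ^ q + b := hPcurve i0
    obtain ⟨ev, hev1, hev2⟩ := hev a b hab
    set U : R := (y - algebraMap F R b) ^ (q - 1) + 1 with hU
    have hUd : (x - algebraMap F R a) ∣ U * (y - algebraMap F R b) := by
      have e1 : U * (y - algebraMap F R b) = x ^ (q + 1) - (algebraMap F R a) ^ (q + 1) := by
        have h1 : (y - algebraMap F R b) ^ q + (algebraMap F R b) ^ q = y ^ q := by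
          rw [← hfrob, sub_add_cancel]
        have h2 : (algebraMap F R a) ^ (q + 1) = (algebraMap F R b) ^ q + algebraMap F R b := by
          rw [← map_pow, hab, map_add, map_pow]
        have h3 : (y - algebraMap F R b) ^ (q - 1) * (y - algebraMap F R b) = (y - algebraMap F R b) ^ q := by
          rw [← pow_succ]; congr 1; omega
        rw [hU, add_mul, h3, hxy, h2]
        linear_combination h1
      rw [e1]; exact sub_dvd_pow_sub_pow _ _ _
    have hUev : ev (U ^ (m * q)) ≠ 0 := by
      rw [map_pow]
      apply pow_ne_zero
      rw [hU, map_add, map_pow, map_sub, hev2, AlgHom.commutes, Algebra.algebraMap_self_apply, sub_self,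
        zero_pow (by omega), map_one, zero_add]
      exact one_ne_zero
    refine final_dvd x (U ^ (m * q)) a ev hev1 hUev (hne a) p hp0 _ ?_
    rw [← hp]
    set S := (good.filter fun i => (P i).1 = a) with hS
    have hSi : ∀ i ∈ S, i ∈ good ∧ (P i).1 = a := fun i hi => Finset.mem_filter.1 hi
    set K' := S.image fun i => (P i).2 - b with hK'
    have hK'c : K'.card = S.card := by
      apply Finset.card_image_of_injOn
      intro i hi j hj hij
      exact hPinj (Prod.ext ((hSi i hi).2.trans (hSi j hj).2.symm) (sub_left_injective hij))
    have hK'K : K' ⊆ K := by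
      intro e he
      obtain ⟨i, hi, rfl⟩ := Finset.mem_image.1 he
      rw [hKm]
      have h1 := hfrobF ((P i).2 - b) b
      rw [sub_add_cancel] at h1
      have h2 := hPcurve i
      rw [(hSi i hi).2, hab] at h2
      linear_combination -h1 - h2
    have hprod : ∏ e ∈ K', (x - algebraMap F R a) ^ m ∣
        ∏ e ∈ K', (U ^ m * aeval ![x, y + algebraMap F R e] G) := by
      apply Finset.prod_dvd_prod_of_dvd
      intro e he
      have heK := (hKm e).1 (hK'K he)
      obtain ⟨i, hi, rfl⟩ := Finset.mem_image.1 he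
      have := hgood i (hSi i hi).1 (y + algebraMap F R ((P i).2 - b)) U ?_ ?_
      · rwa [(hSi i hi).2] at this
      · rw [hfrob, hxy, ← map_pow]
        have : algebraMap F R (((P i).2 - b) ^ q) + algebraMap F R ((P i).2 - b) = 0 := by
          rw [← map_add, heK, map_zero]
        linear_combination -this
      · rw [(hSi i hi).2, map_sub, show y + (algebraMap F R (P i).2 - algebraMap F R b) -
          algebraMap F R (P i).2 = y - algebraMap F R b by ring]
        exact hUd
    rw [Finset.prod_const, hK'c, ← pow_mul] at hprod
    refine hprod.trans ((Finset.prod_dvd_prod_of_subset _ _ _ hK'K).trans ?_)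
    rw [Finset.prod_mul_distrib, Finset.prod_const, hK, ← pow_mul]
  have hall : ∏ a : F, (Polynomial.X - Polynomial.C a) ^
      (m * (good.filter fun i => (P i).1 = a).card) ∣ p := by
    apply Finset.prod_dvd_of_coprime
    · intro a _ b _ hab
      exact (Polynomial.pairwise_coprime_X_sub_C Function.injective_id hab).pow
    · intro a _; exact hdiv a
  have hdeg := Polynomial.natDegree_le_of_dvd hall hp0
  rw [Polynomial.natDegree_prod_of_monic _ _ (fun a _ => (Polynomial.monic_X_sub_C a).pow _)] at hdeg
  simp only [Polynomial.natDegree_pow, Polynomial.natDegree_X_sub_C, mul_one] at hdeg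
  rw [← Finset.mul_sum, ← Finset.card_eq_sum_card_fiberwise (fun _ _ => by simp)] at hdeg
  omega

/-- Fundamental theorem of list decoding of Hermitian codes: if `f ∈ I_{v,m} = ⟨z−h_v, η⟩^m`
is nonzero of `u`-weighted degree `w`, `μ ∈ L(uP∞)` with evaluation at Hamming distance
`t < n − w/m` from `v`, then `f(μ) = 0` in `R`. -/
theorem stmt_9 (q : ℕ) (hq : IsPrimePow q) (F : Type*) [Field F] [Fintype F] [DecidableEq F]
    (hF : Fintype.card F = q ^ 2)
    (u m : ℕ) (hu : 1 ≤ u) (hm : 1 ≤ m)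
    (P : Fin (q ^ 3) → F × F)
    (hPinj : Function.Injective P)
    (hPcurve : ∀ i, (P i).1 ^ (q + 1) = (P i).2 ^ q + (P i).2)
    (hPsurj : ∀ a b : F, a ^ (q + 1) = b ^ q + b → ∃ i, P i = (a, b))
    (v : Fin (q ^ 3) → F)
    -- `f`, given by its unique representation `c` as a linear combination of monomials
    (c : (ℕ × Fin q × ℕ) →₀ F) (hc : c ≠ 0)
    (hfI : Ideal.Quotient.mk
        (Ideal.span {(X 0 : MvPolynomial (Fin 3) F) ^ (q + 1) - X 1 ^ q - X 1})
        (monoSum3 c) ∈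
      (Ideal.span
        { Ideal.Quotient.mk
            (Ideal.span {(X 0 : MvPolynomial (Fin 3) F) ^ (q + 1) - X 1 ^ q - X 1})
            (X 2 - MvPolynomial.rename (Fin.castSucc : Fin 2 → Fin 3)
              (∑ i, C (v i) * Hpoly q (P i).1 (P i).2)),
          Ideal.Quotient.mk
            (Ideal.span {(X 0 : MvPolynomial (Fin 3) F) ^ (q + 1) - X 1 ^ q - X 1})
            ((X 0 : MvPolynomial (Fin 3) F) ^ (q ^ 2) - X 0) }) ^ m)
    (hf0 : Ideal.Quotient.mk
        (Ideal.span {(X 0 : MvPolynomial (Fin 3) F) ^ (q + 1) - X 1 ^ q - X 1})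
        (monoSum3 c) ≠ 0)
    -- `w = deg_u(f)`
    (w : ℕ) (hw : w = c.support.sup fun p => q * p.1 + (q + 1) * (p.2.1 : ℕ) + u * p.2.2)
    -- `M ∈ F[X,Y]` whose residue class `μ` lies in `L(uP∞)`
    (M : MvPolynomial (Fin 2) F) (d : (ℕ × Fin q) →₀ F)
    (hM : M = ∑ p ∈ d.support, C (d p) * X 0 ^ p.1 * X 1 ^ (p.2 : ℕ))
    (hMdeg : ∀ p ∈ d.support, q * p.1 + (q + 1) * (p.2 : ℕ) ≤ u)
    -- `t = d(v, ev(μ))`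
    (t : ℕ)
    (ht : t = (Finset.univ.filter fun i : Fin (q ^ 3) =>
      MvPolynomial.eval ![(P i).1, (P i).2] M ≠ v i).card)
    (htw : (t : ℚ) < (q : ℚ) ^ 3 - (w : ℚ) / (m : ℚ)) :
    -- conclusion: `f(μ) = 0` in `R`
    Ideal.Quotient.mk
      (Ideal.span {(X 0 : MvPolynomial (Fin 2) F) ^ (q + 1) - X 1 ^ q - X 1})
      (MvPolynomial.aeval ![X 0, X 1, M] (monoSum3 c)) = 0 := by
  have hq2 : 2 ≤ q := hq.two_le
  have hprime := curve_prime q hq2 F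
  set I := Ideal.span {(X 0 : MvPolynomial (Fin 2) F) ^ (q + 1) - X 1 ^ q - X 1} with hI
  have hdom : IsDomain (MvPolynomial (Fin 2) F ⧸ I) := Ideal.Quotient.isDomain I
  have hmk : ∀ G : MvPolynomial (Fin 2) F, Ideal.Quotient.mk I G =
      aeval ![Ideal.Quotient.mk I (X 0), Ideal.Quotient.mk I (X 1)] G := by
    intro G
    have : Ideal.Quotient.mkₐ F I =
        aeval ![Ideal.Quotient.mk I (X 0), Ideal.Quotient.mk I (X 1)] := by
      ext i
      fin_cases i <;> simp
    exact DFunLike.congr_fun this G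
  have hxy : (Ideal.Quotient.mk I (X 0)) ^ (q + 1) =
      (Ideal.Quotient.mk I (X 1)) ^ q + Ideal.Quotient.mk I (X 1) := by
    rw [← map_pow, ← map_pow, ← map_add]
    refine Ideal.Quotient.eq.2 ?_
    rw [← sub_sub]
    exact Ideal.mem_span_singleton_self _
  have hlift : ∀ (A : Type _) [CommRing A] [Algebra F A] (a b : A), a ^ (q + 1) = b ^ q + b →
      ∃ σ : (MvPolynomial (Fin 2) F ⧸ I) →ₐ[F] A, σ (Ideal.Quotient.mk I (X 0)) = a ∧
        σ (Ideal.Quotient.mk I (X 1)) = b := by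
    intro A _ _ a b hab
    refine ⟨Ideal.Quotient.liftₐ I (aeval ![a, b]) ?_, ?_, ?_⟩
    · intro r hr
      obtain ⟨s, rfl⟩ := Ideal.mem_span_singleton.1 hr
      have : aeval ![a, b] ((X 0 : MvPolynomial (Fin 2) F) ^ (q + 1) - X 1 ^ q - X 1) = 0 := by
        simp [hab]
      rw [map_mul, this, zero_mul]
    · exact (aeval_X ![a, b] 0)
    · exact (aeval_X ![a, b] 1)
  have hfrob := frob_aux q hq F hF (MvPolynomial (Fin 2) F ⧸ I)
  rw [hmk]
  refine abstract_main hq2 hF hfrob (frob_aux q hq F hF F) (frob_aux q hq F hF _) _ _ hxy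
    (fun a b hab => hlift F a b hab) (fun a ha => hlift _ _ _ ?_) P hPinj hPcurve m w _
    (wb_G c hw M d hM hMdeg)
    (Finset.univ.filter fun i : Fin (q ^ 3) =>
      ¬ MvPolynomial.eval ![(P i).1, (P i).2] M ≠ v i) ?_ ?_
  · rw [hfrob, hxy]
    have : (algebraMap F (MvPolynomial (Fin 2) F ⧸ I) a) ^ q + algebraMap F _ a = 0 := by
      rw [← map_pow, ← map_add, ha, map_zero]
    linear_combination -this
  · intro i hi y' U hy' hU
    have hi' : MvPolynomial.eval ![(P i).1, (P i).2] M = v i := by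
      simpa using hi
    refine local_pow _ y' U (P i).1 (P i).2 hy' hU m _ M _ ?_ ?_ hfI
    · rw [← hF, FiniteField.pow_card]
    · rw [hi', hv_eval hq2 hF P hPinj hPcurve]
  · have hsum := Finset.card_filter_add_card_filter_not
      (s := (Finset.univ : Finset (Fin (q ^ 3))))
      (fun i : Fin (q ^ 3) => MvPolynomial.eval ![(P i).1, (P i).2] M ≠ v i)
    rw [← ht, Finset.card_univ, Fintype.card_fin] at hsum
    have hm' : (0 : ℚ) < m := by exact_mod_cast hm
    have h2 : (w : ℚ) / m < (q : ℚ) ^ 3 - t := by linarith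
    rw [div_lt_iff₀ hm'] at h2
    have h3 : ((q : ℚ) ^ 3) = t + ((Finset.univ.filter fun i : Fin (q ^ 3) =>
      ¬ MvPolynomial.eval ![(P i).1, (P i).2] M ≠ v i).card : ℚ) := by
      exact_mod_cast hsum.symm
    rw [h3, add_sub_cancel_left, mul_comm] at h2
    exact_mod_cast h2
end

section
/- In the setting of the context, assume a_{ss} ≠ 0, a_{rs} ≠ 0, and d := deg(a_{rs}) − deg(a_{ss}) < 0; let c = LC(a_{rs})·LC(a_{ss})^{−1} and b_{rj} = x^{−d}·a_{rj} − c·a_{sj} for 1 ≤ j ≤ r. Then: (B1) deg_u(b_{rr} e_r) = deg_u(x^{−d} a_{rr} e_r); (B2) deg_u(b_{rs} e_s) < deg_u(x^{−d} a_{rs} e_s); (B3) deg_u(b_{rj} e_j) < deg_u(x^{−d} a_{rs} e_s) for s < j < r; (B4) deg_u(b_{rj} e_j) ≤ deg_u(x^{−d} a_{rs} e_s) for j < s. Moreover, for g = Σ_j b_{rj} e_j, deg_u(LT(g)) − deg_u(b_{rr} e_r) ≤ deg_u(LT(g_r)) − deg_u(a_{rr} e_r), with equality only if ind(LT(g)) <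 ind(LT(g_r)). -/
open scoped Classical

/-- `deg_u(a·e_j) = u_x·deg(a) + u_j` for nonzero `a ∈ k[x]`, and `−∞` (`⊥`) for `a = 0`. -/
noncomputable def degu {k : Type*} [Field k] (ux : ℕ) (u : ℕ → ℕ)
    (a : Polynomial k) (j : ℕ) : WithBot ℕ :=
  if a = 0 then ⊥ else ((ux * a.natDegree + u j : ℕ) : WithBot ℕ)

/-- `deg_u(LT(g))` for `g = Σ_{j=1}^r b_j e_j`: the maximum of `deg_u(b_j e_j)`. -/
noncomputable def degLT {k : Type*} [Field k] (ux : ℕ) (u : ℕ → ℕ) (r : ℕ)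
    (b : ℕ → Polynomial k) : WithBot ℕ :=
  (Finset.Icc 1 r).sup fun j => degu ux u (b j) j

/-- `ind(LT(g))` for `g = Σ_{j=1}^r b_j e_j`: the largest index attaining the maximum. -/
noncomputable def indLT {k : Type*} [Field k] (ux : ℕ) (u : ℕ → ℕ) (r : ℕ)
    (b : ℕ → Polynomial k) : ℕ :=
  (((Finset.Icc 1 r).filter fun j => degu ux u (b j) j = degLT ux u r b).sup id)

open Polynomial in
lemma degu_mono' {k : Type*} [Field k] (ux : ℕ) (u : ℕ → ℕ) (p q : k[X]) (j : ℕ)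
    (h : p.degree ≤ q.degree) : degu ux u p j ≤ degu ux u q j := by
  unfold degu
  by_cases hp : p = 0
  · simp [hp]
  · have hq : q ≠ 0 := by
      rintro rfl
      simp at h
      exact hp h
    rw [if_neg hp, if_neg hq]
    have := natDegree_le_natDegree h
    have := Nat.mul_le_mul_left ux this
    exact Nat.cast_le.2 (by omega)

open Polynomial in
lemma degu_strict' {k : Type*} [Field k] (ux : ℕ) (hux : 0 < ux) (u : ℕ → ℕ) (p q : k[X]) (j : ℕ)
    (h : p.degree < q.degree) : degu ux u p j < degu ux u q j := by
  unfold degu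
  have hq : q ≠ 0 := by
    rintro rfl
    simp at h
  rw [if_neg hq]
  by_cases hp : p = 0
  · rw [if_pos hp]; exact WithBot.bot_lt_coe _
  · rw [if_neg hp]
    have := natDegree_lt_natDegree hp h
    have := Nat.mul_lt_mul_of_pos_left this hux
    exact Nat.cast_lt.2 (by omega)

open Polynomial in
lemma degu_sub' {k : Type*} [Field k] (ux : ℕ) (u : ℕ → ℕ) (p q : k[X]) (j : ℕ) :
    degu ux u (p - q) j ≤ max (degu ux u p j) (degu ux u q j) := by
  have h := degree_sub_le p q
  rcases le_total p.degree q.degree with h1 | h1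
  · rw [max_eq_right h1] at h
    exact (degu_mono' ux u _ _ j h).trans (le_max_right _ _)
  · rw [max_eq_left h1] at h
    exact (degu_mono' ux u _ _ j h).trans (le_max_left _ _)

open Polynomial in
lemma degu_C' {k : Type*} [Field k] (ux : ℕ) (u : ℕ → ℕ) (c : k) (q : k[X]) (j : ℕ) :
    degu ux u (C c * q) j ≤ degu ux u q j := by
  apply degu_mono'
  by_cases hc : c = 0
  · simp [hc]
  · rw [degree_C_mul hc]

open Polynomial in
lemma degu_X' {k : Type*} [Field k] (ux : ℕ) (u : ℕ → ℕ) (e : ℕ) (q : k[X]) (j : ℕ) :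
    degu ux u (X ^ e * q) j = ((ux * e : ℕ) : WithBot ℕ) + degu ux u q j := by
  unfold degu
  by_cases hq : q = 0
  · simp [hq]
  · have : X ^ e * q ≠ 0 := mul_ne_zero (pow_ne_zero _ X_ne_zero) hq
    rw [if_neg hq, if_neg this, natDegree_mul (pow_ne_zero _ X_ne_zero) hq, natDegree_X_pow,
      ← Nat.cast_add]
    congr 1
    ring

lemma degu_coe' {k : Type*} [Field k] (ux : ℕ) (u : ℕ → ℕ) (q : Polynomial k) (j : ℕ)
    (hq : q ≠ 0) : degu ux u q j = ((ux * q.natDegree + u j : ℕ) : WithBot ℕ) := if_neg hq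

lemma sum_ne_bot' (S : Finset ℕ) (f : ℕ → WithBot ℕ) (h : ∑ i ∈ S, f i ≠ ⊥) :
    ∀ i ∈ S, f i ≠ ⊥ := by
  intro i hi h0
  apply h
  rw [← Finset.add_sum_erase S f hi, h0, WithBot.bot_add]

/-- Proposition 6 (case `d < 0`): the one-step update `g = x^{−d}·g_r − c·g_s` satisfies
(B1)–(B4), and `deg_u(LT(g)) − deg_u(b_{rr} e_r) ≤ deg_u(LT(g_r)) − deg_u(a_{rr} e_r)`
(stated additively), with equality only if `ind(LT(g)) < ind(LT(g_r))`. -/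
theorem stmt_17 (k : Type*) [Field k] (m : ℕ) (hm : 1 ≤ m)
    (ux : ℕ) (hux : 0 < ux) (u : ℕ → ℕ) (hupos : ∀ i, 0 < u i)
    (r s : ℕ) (hs : 1 ≤ s) (hsr : s < r) (hrm : r ≤ m)
    (a : ℕ → ℕ → Polynomial k)
    -- (E1)
    (hE1 : ∀ j, s < j → j ≤ r → degu ux u (a s j) j < degu ux u (a s s) s)
    (hE1' : ∀ j', 1 ≤ j' → j' < s → degu ux u (a s j') j' ≤ degu ux u (a s s) s)
    -- (E2)
    (hE2 : ∀ j, s < j → j ≤ r → degu ux u (a r j) j < degu ux u (a r s) s)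
    (hE2' : ∀ j', 1 ≤ j' → j' < s → degu ux u (a r j') j' ≤ degu ux u (a r s) s)
    -- (E3)
    (hE3 : ∀ π : ℕ → ℕ, Set.BijOn π (Set.Icc 1 r) (Set.Icc 1 r) →
      (∃ i ∈ Set.Icc 1 r, π i ≠ i) →
      ∑ i ∈ Finset.Icc 1 r, degu ux u (a i (π i)) (π i) <
        ∑ i ∈ Finset.Icc 1 r, degu ux u (a i i) i)
    (hass : a s s ≠ 0) (hars : a r s ≠ 0)
    -- `d = deg(a_rs) − deg(a_ss) < 0`; `e = −d`
    (hd : (a r s).natDegree < (a s s).natDegree)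
    (e : ℕ) (he : e = (a s s).natDegree - (a r s).natDegree)
    (c : k) (hc : c = (a r s).leadingCoeff * (a s s).leadingCoeff⁻¹)
    (b : ℕ → Polynomial k)
    (hb : ∀ j, b j = Polynomial.X ^ e * a r j - Polynomial.C c * a s j) :
    -- (B1)
    degu ux u (b r) r = degu ux u (Polynomial.X ^ e * a r r) r ∧
    -- (B2)
    degu ux u (b s) s < degu ux u (Polynomial.X ^ e * a r s) s ∧
    -- (B3)
    (∀ j, s < j → j < r → degu ux u (b j) j < degu ux u (Polynomial.X ^ e * a r s) s) ∧
    -- (B4)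
    (∀ j, 1 ≤ j → j < s → degu ux u (b j) j ≤ degu ux u (Polynomial.X ^ e * a r s) s) ∧
    -- final claim, stated additively
    degLT ux u r b + degu ux u (a r r) r ≤ degLT ux u r (a r) + degu ux u (b r) r ∧
    (degLT ux u r b + degu ux u (a r r) r = degLT ux u r (a r) + degu ux u (b r) r →
      indLT ux u r b < indLT ux u r (a r)) := by
  have key : degu ux u (a s r) r + degu ux u (a r s) s
      < degu ux u (a s s) s + degu ux u (a r r) r ∧ a r r ≠ 0 := by
    have hbij : Set.BijOn (Equiv.swap s r) (Set.Icc 1 r) (Set.Icc 1 r) := by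
      have hm : Set.MapsTo (Equiv.swap s r) (Set.Icc 1 r) (Set.Icc 1 r) := by
        intro i hi
        rw [Set.mem_Icc] at *
        rw [Equiv.swap_apply_def]
        split_ifs <;> omega
      refine ⟨hm, (Equiv.injective _).injOn, ?_⟩
      intro i hi
      exact ⟨Equiv.swap s r i, hm hi, by simp⟩
    have h := hE3 (Equiv.swap s r) hbij
      ⟨s, Set.mem_Icc.2 ⟨hs, hsr.le⟩, by rw [Equiv.swap_apply_left]; omega⟩
    have hne := sum_ne_bot' _ _ (ne_bot_of_gt h)
    have hs1 : s ∈ Finset.Icc 1 r := Finset.mem_Icc.2 ⟨hs, hsr.le⟩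
    have hr1 : r ∈ (Finset.Icc 1 r).erase s :=
      Finset.mem_erase.2 ⟨by omega, Finset.mem_Icc.2 ⟨by omega, le_rfl⟩⟩
    constructor
    · rw [← Finset.add_sum_erase _ _ hs1, ← Finset.add_sum_erase _ _ hr1,
        ← Finset.add_sum_erase _ (fun i => degu ux u (a i i) i) hs1,
        ← Finset.add_sum_erase _ (fun i => degu ux u (a i i) i) hr1] at h
      have h2 : ∑ i ∈ ((Finset.Icc 1 r).erase s).erase r,
          degu ux u (a i (Equiv.swap s r i)) (Equiv.swap s r i)
          = ∑ i ∈ ((Finset.Icc 1 r).erase s).erase r, degu ux u (a i i) i := by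
        apply Finset.sum_congr rfl
        intro i hi
        simp only [Finset.mem_erase] at hi
        rw [Equiv.swap_apply_of_ne_of_ne hi.2.1 hi.1]
      rw [h2, Equiv.swap_apply_left, Equiv.swap_apply_right, ← add_assoc, ← add_assoc] at h
      exact lt_of_add_lt_add_right h
    · intro h0
      apply hne r (Finset.mem_of_mem_erase hr1)
      simp [degu, h0]
  obtain ⟨key, harr⟩ := key
  have hX : degu ux u (Polynomial.X ^ e * a r s) s = degu ux u (a s s) s := by
    rw [degu_X', degu_coe' _ _ _ _ hars, degu_coe' _ _ _ _ hass, ← Nat.cast_add]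
    congr 1
    have : (a s s).natDegree = e + (a r s).natDegree := by omega
    rw [this]; ring
  have hc0 : c ≠ 0 := by
    rw [hc]
    exact mul_ne_zero (Polynomial.leadingCoeff_ne_zero.2 hars)
      (inv_ne_zero (Polynomial.leadingCoeff_ne_zero.2 hass))
  have B1 : degu ux u (b r) r = degu ux u (Polynomial.X ^ e * a r r) r := by
    have h1 : degu ux u (a s r) r < degu ux u (Polynomial.X ^ e * a r r) r := by
      rw [← hX, degu_X', add_right_comm, ← degu_X'] at key
      exact lt_of_add_lt_add_right key
    have h2 : (Polynomial.C c * a s r).degree < (Polynomial.X ^ e * a r r).degree := by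
      by_contra hcon
      have := degu_mono' ux u _ _ r (not_lt.1 hcon)
      exact absurd (this.trans (degu_C' ux u c _ r)) (not_le.2 h1)
    have h3 := Polynomial.degree_sub_eq_left_of_degree_lt h2
    rw [← hb] at h3
    exact le_antisymm (degu_mono' _ _ _ _ _ h3.le) (degu_mono' _ _ _ _ _ h3.ge)
  have B2 : degu ux u (b s) s < degu ux u (Polynomial.X ^ e * a r s) s := by
    apply degu_strict' _ hux
    rw [hb]
    have hne : Polynomial.X ^ e * a r s ≠ 0 :=
      mul_ne_zero (pow_ne_zero _ Polynomial.X_ne_zero) hars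
    apply Polynomial.degree_sub_lt_left _ hne
    · rw [Polynomial.leadingCoeff_mul, Polynomial.leadingCoeff_mul, Polynomial.leadingCoeff_X_pow,
        Polynomial.leadingCoeff_C, hc, one_mul, mul_assoc,
        inv_mul_cancel₀ (Polynomial.leadingCoeff_ne_zero.2 hass), mul_one]
    · rw [Polynomial.degree_C_mul hc0, Polynomial.degree_mul, Polynomial.degree_X_pow,
        Polynomial.degree_eq_natDegree hars, Polynomial.degree_eq_natDegree hass]
      have : (a s s).natDegree = e + (a r s).natDegree := by omega
      rw [this]; push_cast; rfl
  have B3 : ∀ j, s < j → j ≤ r →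
      degu ux u (b j) j < degu ux u (Polynomial.X ^ e * a r s) s := by
    intro j hj hjr
    rw [hb]
    refine (degu_sub' ux u _ _ j).trans_lt (max_lt ?_ ?_)
    · rw [degu_X', degu_X']
      exact WithBot.add_lt_add_left WithBot.coe_ne_bot (hE2 j hj hjr)
    · rw [hX]
      exact (degu_C' ux u c _ j).trans_lt (hE1 j hj hjr)
  have B4 : ∀ j, 1 ≤ j → j < s →
      degu ux u (b j) j ≤ degu ux u (Polynomial.X ^ e * a r s) s := by
    intro j hj hjr
    rw [hb]
    refine (degu_sub' ux u _ _ j).trans (max_le ?_ ?_)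
    · rw [degu_X', degu_X']
      exact add_le_add_right (hE2' j hj hjr) _
    · rw [hX]
      exact (degu_C' ux u c _ j).trans (hE1' j hj hjr)
  have hs1 : s ∈ Finset.Icc 1 r := Finset.mem_Icc.2 ⟨hs, hsr.le⟩
  have hLa : degLT ux u r (a r) = degu ux u (a r s) s := by
    apply le_antisymm
    · apply Finset.sup_le
      intro j hj
      rw [Finset.mem_Icc] at hj
      rcases lt_trichotomy j s with h | h | h
      · exact hE2' j hj.1 h
      · rw [h]
      · exact (hE2 j h hj.2).le
    · exact Finset.le_sup (f := fun j => degu ux u (a r j) j) hs1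
  have hLb : degLT ux u r b ≤ degu ux u (Polynomial.X ^ e * a r s) s := by
    apply Finset.sup_le
    intro j hj
    rw [Finset.mem_Icc] at hj
    rcases lt_trichotomy j s with h | h | h
    · exact B4 j hj.1 h
    · rw [h]; exact B2.le
    · exact (B3 j h hj.2).le
  have hR : degLT ux u r (a r) + degu ux u (b r) r
      = degu ux u (Polynomial.X ^ e * a r s) s + degu ux u (a r r) r := by
    rw [hLa, B1, degu_X', degu_X', ← add_assoc, add_comm (degu ux u (a r s) s)]
  refine ⟨B1, B2, fun j h1 h2 => B3 j h1 h2.le, B4, ?_, ?_⟩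
  · rw [hR]
    exact add_le_add_left hLb _
  · intro heq
    rw [hR] at heq
    have hL : degLT ux u r b = degu ux u (Polynomial.X ^ e * a r s) s := by
      refine le_antisymm hLb (not_lt.1 fun hlt => ?_)
      have hrr : degu ux u (a r r) r ≠ ⊥ := by
        rw [degu_coe' _ _ _ _ harr]; exact WithBot.coe_ne_bot
      exact (WithBot.add_lt_add_right hrr hlt).ne heq
    have h1 : indLT ux u r b < s := by
      unfold indLT
      rw [Finset.sup_lt_iff (by exact hs)]
      intro j hj
      rw [Finset.mem_filter, Finset.mem_Icc, hL] at hj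
      obtain ⟨⟨h1, h2⟩, h3⟩ := hj
      rcases lt_trichotomy j s with h | h | h
      · exact h
      · rw [h] at h3; exact absurd h3 B2.ne
      · exact absurd h3 (B3 j h h2).ne
    refine h1.trans_le ?_
    unfold indLT
    exact Finset.le_sup (f := id) (Finset.mem_filter.2 ⟨hs1, hLa.symm⟩)
end
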